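/- Functional Santaló inequality (Lehec): Let d ≥ 1 and let f and g be measurable functions on ℝ^d satisfying f(x) + g(y) ≤ −x·y for all x, y ∈ ℝ^d. If e^f is integrable with ∫ x e^{f(x)} dx = 0 (barycenter at the origin), then (∫ e^{f(x)} dx)(∫ e^{g(y)} dy) ≤ (2π)^d. -/

import Mathlib

open MeasureTheory
open scoped RealInnerProductSpace

open Set

/-- One-dimensional Brunn–Minkowski inequality for nonempty compact sets. -/
theorem volume_add_volume_le_of_isCompact {A B C : Set ℝ} (hA : IsCompact A) (hB : IsCompact B)
    (hA₀ : A.Nonempty) (hB₀ : B.Nonempty) (hC : ∀ a ∈ A, ∀ b ∈ B, a + b ∈ C) :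
    volume A + volume B ≤ volume C := by
  obtain ⟨a, ha, hamax⟩ := hA.exists_isGreatest hA₀
  obtain ⟨b, hb, hbmin⟩ := hB.exists_isLeast hB₀
  have hA' : volume ((fun x => x + -b) ⁻¹' A) = volume A := measure_preimage_add_right _ _ _
  have hB' : volume ((fun x => x + -a) ⁻¹' B) = volume B := measure_preimage_add_right _ _ _
  have hmeas : MeasurableSet ((fun x => x + -a) ⁻¹' B) :=
    hB.measurableSet.preimage (by fun_prop)
  have hdisj : AEDisjoint volume ((fun x => x + -b) ⁻¹' A) ((fun x => x + -a) ⁻¹' B) := by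
    refine measure_mono_null (t := {a + b}) ?_ (by simp)
    rintro x ⟨hx₁, hx₂⟩
    have h₁ := hamax hx₁
    have h₂ := hbmin hx₂
    simp only [mem_singleton_iff]
    linarith
  rw [← hA', ← hB', ← measure_union₀ hmeas.nullMeasurableSet hdisj]
  refine measure_mono (union_subset (fun x hx => ?_) (fun x hx => ?_))
  · simpa using hC _ hx _ hb
  · simpa using hC _ ha _ hx

/-- One-dimensional Brunn–Minkowski inequality for nonempty measurable sets. -/
theorem volume_add_volume_le {A B C : Set ℝ} (hA : MeasurableSet A) (hB : MeasurableSet B)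
    (hA₀ : A.Nonempty) (hB₀ : B.Nonempty) (hC : ∀ a ∈ A, ∀ b ∈ B, a + b ∈ C) :
    volume A + volume B ≤ volume C := by
  obtain ⟨a, ha⟩ := hA₀
  obtain ⟨b, hb⟩ := hB₀
  rw [hA.measure_eq_iSup_isCompact, hB.measure_eq_iSup_isCompact]
  simp_rw [iSup_and']
  refine ENNReal.biSup_add_biSup_le' ⟨∅, by simp⟩ ⟨∅, by simp⟩ fun K hK L hL => ?_
  refine (add_le_add (measure_mono (subset_insert a K)) (measure_mono (subset_insert b L))).trans
    (volume_add_volume_le_of_isCompact (hK.2.insert a) (hL.2.insert b) (insert_nonempty a K)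
      (insert_nonempty b L) fun x hx y hy => ?_)
  exact hC x (insert_subset ha hK.1 hx) y (insert_subset hb hL.1 hy)

theorem ENNReal.mul_le_sq_of_add_le_two_mul {a b c : ENNReal} (h : a + b ≤ 2 * c) :
    a * b ≤ c ^ 2 := by
  rcases eq_or_ne c ⊤ with rfl | hc
  · simp
  have hab : a + b ≠ ⊤ := ne_top_of_le_ne_top (ENNReal.mul_ne_top (by simp) hc) h
  obtain ⟨ha, hb⟩ := ENNReal.add_ne_top.1 hab
  lift a to NNReal using ha
  lift b to NNReal using hb
  lift c to NNReal using hc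
  norm_cast at h ⊢
  have h' : (a : ℝ) + b ≤ 2 * c := by exact_mod_cast h
  have : (a : ℝ) * b ≤ c ^ 2 := by
    nlinarith [sq_nonneg ((a : ℝ) - b), a.coe_nonneg, b.coe_nonneg, c.coe_nonneg]
  exact_mod_cast this

/-- The one-dimensional Prékopa–Leindler inequality at the midpoint, for functions whose supremum
is one. -/
theorem lintegral_mul_lintegral_le_of_isLUB_one {f g h : ℝ → ℝ} (hf : Measurable f)
    (hg : Measurable g) (hh : Measurable h) (hf₀ : 0 ≤ f) (hg₀ : 0 ≤ g) (hh₀ : 0 ≤ h)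
    (hf₁ : IsLUB (range f) 1) (hg₁ : IsLUB (range g) 1)
    (hfg : ∀ x y, f x * g y ≤ h ((x + y) / 2) ^ 2) :
    (∫⁻ x, ENNReal.ofReal (f x)) * (∫⁻ x, ENNReal.ofReal (g x)) ≤
      (∫⁻ x, ENNReal.ofReal (h x)) ^ 2 := by
  apply ENNReal.mul_le_sq_of_add_le_two_mul
  rw [lintegral_eq_lintegral_meas_lt _ (.of_forall hf₀) hf.aemeasurable,
    lintegral_eq_lintegral_meas_lt _ (.of_forall hg₀) hg.aemeasurable,
    lintegral_eq_lintegral_meas_lt _ (.of_forall hh₀) hh.aemeasurable,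
    ← lintegral_const_mul' _ _ (by simp), ← lintegral_add_left']
  · refine setLIntegral_mono' measurableSet_Ioi fun t (ht : 0 < t) => ?_
    rcases lt_or_ge t 1 with ht₁ | ht₁
    · have hscale : volume ((fun x => 2⁻¹ * x) ⁻¹' {x | t < h x}) = 2 * volume {x | t < h x} := by
        rw [Real.volume_preimage_mul_left (by norm_num)]
        norm_num
      rw [← hscale]
      obtain ⟨_, ⟨a, rfl⟩, ha, -⟩ := hf₁.exists_between ht₁
      obtain ⟨_, ⟨b, rfl⟩, hb, -⟩ := hg₁.exists_between ht₁
      refine volume_add_volume_le (measurableSet_lt measurable_const hf)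
        (measurableSet_lt measurable_const hg) ⟨a, ha⟩ ⟨b, hb⟩ fun x hx y hy => ?_
      rw [mem_ofPred_eq] at hx hy
      rw [mem_preimage, mem_ofPred_eq]
      have := hfg x y
      rw [show 2⁻¹ * (x + y) = (x + y) / 2 by ring]
      refine lt_of_pow_lt_pow_left₀ 2 (hh₀ _) (lt_of_lt_of_le ?_ this)
      nlinarith
    · have hemp : ∀ {φ : ℝ → ℝ}, IsLUB (range φ) 1 → {x | t < φ x} = ∅ := fun hφ => by
        ext x
        simpa using (hφ.1 (mem_range_self x)).trans ht₁
      simp [hemp hf₁, hemp hg₁]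
  · refine (Antitone.measurable fun s t hst => ?_).aemeasurable
    exact measure_mono fun x (hx : t < f x) => hst.trans_lt hx

/-- The one-dimensional Prékopa–Leindler inequality at the midpoint, for bounded positive
functions. -/
theorem lintegral_mul_lintegral_le_of_bddAbove {f g h : ℝ → ℝ} (hf : Measurable f)
    (hg : Measurable g) (hh : Measurable h) (hf₀ : ∀ x, 0 < f x) (hg₀ : ∀ x, 0 < g x)
    (hh₀ : 0 ≤ h) (hfb : BddAbove (range f)) (hgb : BddAbove (range g))
    (hfg : ∀ x y, f x * g y ≤ h ((x + y) / 2) ^ 2) :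
    (∫⁻ x, ENNReal.ofReal (f x)) * (∫⁻ x, ENNReal.ofReal (g x)) ≤
      (∫⁻ x, ENNReal.ofReal (h x)) ^ 2 := by
  have hnorm : ∀ {φ : ℝ → ℝ}, (∀ x, 0 < φ x) → BddAbove (range φ) →
      ∃ M > 0, IsLUB (range fun x => φ x / M) 1 := by
    intro φ hφ hb
    have hlub := isLUB_ciSup hb
    have hM : 0 < ⨆ x, φ x := (hφ 0).trans_le (le_ciSup hb 0)
    refine ⟨_, hM, ?_, fun u hu => ?_⟩
    · rintro _ ⟨x, rfl⟩
      exact (div_le_one hM).2 (le_ciSup hb x)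
    · by_contra! hu'
      refine absurd (hlub.2 (show u * (⨆ x, φ x) ∈ upperBounds (range φ) from ?_)) ?_
      · rintro _ ⟨x, rfl⟩
        exact (div_le_iff₀ hM).1 (hu ⟨x, rfl⟩)
      · rw [not_le]
        nlinarith
  obtain ⟨M, hM, hfM⟩ := hnorm hf₀ hfb
  obtain ⟨N, hN, hgN⟩ := hnorm hg₀ hgb
  have key := lintegral_mul_lintegral_le_of_isLUB_one (f := fun x => f x / M)
    (g := fun x => g x / N) (h := fun x => h x / √(M * N)) (by fun_prop) (by fun_prop)
    (by fun_prop) (fun x => (div_pos (hf₀ x) hM).le) (fun x => (div_pos (hg₀ x) hN).le)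
    (fun x => div_nonneg (hh₀ x) (Real.sqrt_nonneg _)) hfM hgN fun x y => by
      rw [div_pow, Real.sq_sqrt (by positivity), div_mul_div_comm]
      gcongr
      exact hfg x y
  have hscale : ∀ {φ : ℝ → ℝ} {c : ℝ}, 0 < c →
      ∫⁻ x, ENNReal.ofReal (φ x) = ENNReal.ofReal c * ∫⁻ x, ENNReal.ofReal (φ x / c) := by
    intro φ c hc
    rw [← lintegral_const_mul' _ _ (by simp)]
    refine lintegral_congr fun x => ?_
    rw [← ENNReal.ofReal_mul hc.le, mul_div_cancel₀ _ hc.ne']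
  rw [hscale hM (φ := f), hscale hN (φ := g), hscale (Real.sqrt_pos.2 (mul_pos hM hN)) (φ := h),
    mul_mul_mul_comm, mul_pow, ← ENNReal.ofReal_mul hM.le, ← ENNReal.ofReal_pow (by positivity),
    Real.sq_sqrt (by positivity)]
  gcongr

theorem lintegral_Ioi_eq_lintegral_exp (F : ℝ → ℝ) :
    ∫⁻ s in Ioi 0, ENNReal.ofReal (F s) =
      ∫⁻ x, ENNReal.ofReal (Real.exp x * F (Real.exp x)) := by
  have h := lintegral_image_eq_lintegral_abs_deriv_mul MeasurableSet.univ
    (fun x _ => (Real.hasDerivAt_exp x).hasDerivWithinAt) Real.exp_injective.injOn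
    (fun s => ENNReal.ofReal (F s))
  rw [image_univ, Real.range_exp, setLIntegral_univ] at h
  rw [h]
  refine lintegral_congr fun x => ?_
  rw [abs_of_pos (Real.exp_pos x), ENNReal.ofReal_mul (Real.exp_pos x).le]

theorem lintegral_Ioi_gaussian :
    ∫⁻ s in Ioi (0 : ℝ), ENNReal.ofReal (Real.exp (-(s ^ 2 / 2))) =
      ENNReal.ofReal √(Real.pi / 2) := by
  have h : ∀ s : ℝ, Real.exp (-(s ^ 2 / 2)) = Real.exp (-(1 / 2) * s ^ 2) := fun s => by ring_nf
  simp_rw [h]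
  rw [← ofReal_integral_eq_lintegral_ofReal
    (integrable_exp_neg_mul_sq (by norm_num)).integrableOn (.of_forall fun s => by positivity),
    integral_gaussian_Ioi]
  congr 1
  rw [show Real.pi / (1 / 2) = 2 ^ 2 * (Real.pi / 2) by ring, Real.sqrt_mul (by norm_num),
    Real.sqrt_sq (by norm_num)]
  ring

theorem lintegral_Ioi_mul_lintegral_Ioi_le {F G : ℝ → ℝ} {K : ℝ} (hF : Measurable F)
    (hG : Measurable G) (hF₀ : ∀ s, 0 < F s) (hG₀ : ∀ s, 0 < G s)
    (hFG : ∀ s t, 0 < s → 0 < t → F s * G t ≤ K * Real.exp (-(s * t))) :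
    (∫⁻ s in Ioi 0, ENNReal.ofReal (F s)) * (∫⁻ t in Ioi 0, ENNReal.ofReal (G t)) ≤
      ENNReal.ofReal (K * (Real.pi / 2)) := by
  have hK : 0 < K := by
    have := (mul_pos (hF₀ 1) (hG₀ 1)).trans_le (hFG 1 1 one_pos one_pos)
    exact pos_of_mul_pos_left this (Real.exp_pos _).le
  have hbdd : ∀ {F G : ℝ → ℝ}, (∀ s, 0 < G s) →
      (∀ s t, 0 < s → 0 < t → F s * G t ≤ K * Real.exp (-(s * t))) →
      BddAbove (range fun x => Real.exp x * F (Real.exp x)) := by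
    intro F G hG₀ hFG
    refine ⟨K / G 1, ?_⟩
    rintro _ ⟨x, rfl⟩
    have h₁ := hFG (Real.exp x) 1 (Real.exp_pos x) one_pos
    rw [le_div_iff₀ (hG₀ 1)]
    have h₂ : Real.exp x * Real.exp (-(Real.exp x * 1)) ≤ 1 := by
      rw [← Real.exp_add, Real.exp_le_one_iff]
      linarith [Real.add_one_le_exp x]
    calc Real.exp x * F (Real.exp x) * G 1 = Real.exp x * (F (Real.exp x) * G 1) := by ring
      _ ≤ Real.exp x * (K * Real.exp (-(Real.exp x * 1))) := by gcongr
      _ = K * (Real.exp x * Real.exp (-(Real.exp x * 1))) := by ring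
      _ ≤ K * 1 := by gcongr
      _ = K := mul_one K
  have key := lintegral_mul_lintegral_le_of_bddAbove
    (f := fun x => Real.exp x * F (Real.exp x)) (g := fun x => Real.exp x * G (Real.exp x))
    (h := fun x => Real.exp x * (√K * Real.exp (-(Real.exp x ^ 2 / 2))))
    (by fun_prop) (by fun_prop) (by fun_prop) (fun x => mul_pos (Real.exp_pos x) (hF₀ _))
    (fun x => mul_pos (Real.exp_pos x) (hG₀ _)) (fun x => by positivity) (hbdd hG₀ hFG)
    (hbdd hF₀ fun s t hs ht => by simpa only [mul_comm] using hFG t s ht hs) fun x y => by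
      have h₁ : Real.exp ((x + y) / 2) ^ 2 = Real.exp x * Real.exp y := by
        rw [← Real.exp_nat_mul, ← Real.exp_add]
        congr 1
        push_cast
        ring
      rw [mul_pow, mul_pow, h₁, Real.sq_sqrt hK.le, ← Real.exp_nat_mul, mul_mul_mul_comm]
      refine mul_le_mul_of_nonneg_left ?_ (by positivity)
      refine (hFG _ _ (Real.exp_pos x) (Real.exp_pos y)).trans_eq ?_
      congr 2
      push_cast
      ring
  rw [lintegral_Ioi_eq_lintegral_exp, lintegral_Ioi_eq_lintegral_exp]
  refine key.trans_eq ?_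
  rw [← lintegral_Ioi_eq_lintegral_exp fun s => √K * Real.exp (-(s ^ 2 / 2))]
  simp_rw [ENNReal.ofReal_mul (Real.sqrt_nonneg K)]
  rw [lintegral_const_mul' _ _ (by simp), lintegral_Ioi_gaussian, mul_pow,
    ← ENNReal.ofReal_pow (by positivity), ← ENNReal.ofReal_pow (by positivity),
    Real.sq_sqrt hK.le, Real.sq_sqrt (by positivity), ENNReal.ofReal_mul hK.le]

theorem lintegral_Ioi_ofReal_pos {F : ℝ → ℝ} (hF : Measurable F) (hF₀ : ∀ s, 0 < s → 0 < F s) :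
    0 < ∫⁻ s in Ioi 0, ENNReal.ofReal (F s) := by
  rw [setLIntegral_pos_iff (by fun_prop), inter_eq_right.2 fun s hs => by simpa using hF₀ s hs]
  simp

/-- If `F s * G t ≤ K e^{-st}` on the positive quadrant, both functions are integrable there. -/
theorem integrableOn_Ioi_of_mul_le {F G : ℝ → ℝ} {K : ℝ} (hF : Measurable F)
    (hG : Measurable G) (hF₀ : ∀ s, 0 < F s) (hG₀ : ∀ s, 0 < G s)
    (hFG : ∀ s t, 0 < s → 0 < t → F s * G t ≤ K * Real.exp (-(s * t))) :
    IntegrableOn F (Ioi 0) := by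
  refine ⟨hF.aestronglyMeasurable, ?_⟩
  rw [hasFiniteIntegral_iff_ofReal (.of_forall fun s => (hF₀ s).le)]
  have h := (lintegral_Ioi_mul_lintegral_Ioi_le hF hG hF₀ hG₀ hFG).trans_lt ENNReal.ofReal_lt_top
  exact ENNReal.lt_top_of_mul_ne_top_left h.ne (lintegral_Ioi_ofReal_pos hG fun s _ => hG₀ s).ne'

/-- The Santaló inequality on the half-line. -/
theorem integral_Ioi_mul_integral_Ioi_le {F G : ℝ → ℝ} {K : ℝ} (hF : Measurable F)
    (hG : Measurable G) (hF₀ : ∀ s, 0 < F s) (hG₀ : ∀ s, 0 < G s)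
    (hFG : ∀ s t, 0 < s → 0 < t → F s * G t ≤ K * Real.exp (-(s * t))) :
    (∫ s in Ioi 0, F s) * (∫ t in Ioi 0, G t) ≤ K * (Real.pi / 2) := by
  have hK : 0 < K := by
    have := (mul_pos (hF₀ 1) (hG₀ 1)).trans_le (hFG 1 1 one_pos one_pos)
    exact pos_of_mul_pos_left this (Real.exp_pos _).le
  have hFi := integrableOn_Ioi_of_mul_le hF hG hF₀ hG₀ hFG
  have hGi := integrableOn_Ioi_of_mul_le hG hF hG₀ hF₀
    fun s t hs ht => by simpa only [mul_comm] using hFG t s ht hs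
  have h := lintegral_Ioi_mul_lintegral_Ioi_le hF hG hF₀ hG₀ hFG
  rw [← ofReal_integral_eq_lintegral_ofReal hFi (.of_forall fun s => (hF₀ s).le),
    ← ofReal_integral_eq_lintegral_ofReal hGi (.of_forall fun s => (hG₀ s).le),
    ← ENNReal.ofReal_mul (integral_nonneg fun s => (hF₀ s).le)] at h
  exact (ENNReal.ofReal_le_ofReal_iff (by positivity)).1 h

theorem integral_Ioi_pos {F : ℝ → ℝ} (hF : Measurable F) (hF₀ : ∀ s, 0 < s → 0 < F s)
    (hFi : IntegrableOn F (Ioi 0)) : 0 < ∫ s in Ioi 0, F s := by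
  have h := lintegral_Ioi_ofReal_pos hF hF₀
  rwa [← ofReal_integral_eq_lintegral_ofReal hFi
    ((ae_restrict_iff' measurableSet_Ioi).2 (.of_forall fun s hs => (hF₀ s hs).le)),
    ENNReal.ofReal_pos] at h

theorem integral_eq_integral_Ioi_add {φ : ℝ → ℝ} (hφ : Integrable φ) :
    ∫ s, φ s = (∫ s in Ioi 0, φ s) + ∫ s in Ioi 0, φ (-s) := by
  have h := integral_comp_neg_Ioi 0 φ
  rw [neg_zero] at h
  rw [h, add_comm, intervalIntegral.integral_Iic_add_Ioi hφ.integrableOn hφ.integrableOn]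

/-- An integrable density on the line with positive integral has a median. -/
theorem exists_median {φ : ℝ → ℝ} (hφ : Integrable φ) (hpos : 0 < ∫ s, φ s) :
    ∃ c, (∫ s in Ioi 0, φ (s + c)) = (∫ s, φ s) / 2 ∧
      (∫ s in Ioi 0, φ (-s + c)) = (∫ s, φ s) / 2 := by
  set M := ∫ s, φ s
  have hsplit : M = (∫ s in Iic 0, φ s) + ∫ s in Ioi 0, φ s :=
    (intervalIntegral.integral_Iic_add_Ioi hφ.integrableOn hφ.integrableOn).symm
  have hcont : Continuous fun c => ∫ s in (0 : ℝ)..c, φ s :=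
    intervalIntegral.continuous_primitive (fun _ _ => hφ.intervalIntegrable) 0
  have htop := intervalIntegral_tendsto_integral_Ioi 0 hφ.integrableOn Filter.tendsto_id
  have hbot := (intervalIntegral_tendsto_integral_Iic 0 hφ.integrableOn Filter.tendsto_id).neg
  simp only [id, ← intervalIntegral.integral_symm] at htop hbot
  obtain ⟨a, ha⟩ := (hbot.eventually_lt_const
    (show -(∫ s in Iic 0, φ s) < M / 2 - ∫ s in Iic 0, φ s by linarith)).exists
  obtain ⟨b, hb⟩ := (htop.eventually_const_lt
    (show M / 2 - (∫ s in Iic 0, φ s) < ∫ s in Ioi 0, φ s by linarith)).exists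
  obtain ⟨c, hc⟩ := mem_range_of_exists_le_of_exists_ge hcont ⟨a, ha.le⟩ ⟨b, hb.le⟩
  have hshift : ∫ s in Ioi 0, φ (s + c) = ∫ s in Ioi c, φ s := by
    have h := (measurePreserving_add_right volume c).setIntegral_preimage_emb
      (measurableEmbedding_addRight c) φ (Ioi c)
    simpa using h
  have hIoi := intervalIntegral.integral_interval_add_Ioi (a := 0) (b := c)
    hφ.integrableOn hφ.integrableOn
  have hright : ∫ s in Ioi 0, φ (s + c) = M / 2 := by
    rw [hshift]
    linarith
  refine ⟨c, hright, ?_⟩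
  have h := integral_eq_integral_Ioi_add (hφ.comp_add_right c)
  rw [integral_add_right_eq_self φ c] at h
  linarith

/-- A pair of positive measurable functions with `F x * G y ≤ K e^{-B(x, y)}`. -/
structure IsPolarPair {α β : Type*} [MeasurableSpace α] [MeasurableSpace β] (B : α → β → ℝ)
    (K : ℝ) (F : α → ℝ) (G : β → ℝ) : Prop where
  measurable_left : Measurable F
  measurable_right : Measurable G
  pos_left : ∀ x, 0 < F x
  pos_right : ∀ y, 0 < G y
  mul_le : ∀ x y, F x * G y ≤ K * Real.exp (-B x y)

/-- The standard pairing on `ℝ × ℝⁿ`. -/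
def prodDot {n : ℕ} (p q : ℝ × (Fin n → ℝ)) : ℝ := p.1 * q.1 + p.2 ⬝ᵥ q.2

/-- The Santaló inequality for centered polar pairs on `ℝⁿ`. -/
def SantaloInequality (n : ℕ) : Prop :=
  ∀ (K : ℝ) (F G : (Fin n → ℝ) → ℝ), IsPolarPair (· ⬝ᵥ ·) K F G →
    (∀ i, ∫ x, x i * F x = 0) → (∫ x, F x) * (∫ x, G x) ≤ K * (2 * Real.pi) ^ n

theorem integrable_exp_neg_abs : Integrable fun x : ℝ => Real.exp (-|x|) := by
  refine (integrable_inv_one_add_sq.const_mul 2).mono' (by fun_prop) (.of_forall fun x => ?_)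
  rw [Real.norm_of_nonneg (Real.exp_pos _).le, Real.exp_neg, ← div_eq_mul_inv,
    le_div_iff₀ (by positivity), inv_mul_le_iff₀ (Real.exp_pos _)]
  nlinarith [Real.quadratic_le_exp_of_nonneg (abs_nonneg x), sq_abs x, abs_nonneg x]

theorem integrable_exp_neg_sum_abs (n : ℕ) :
    Integrable fun x : Fin n → ℝ => Real.exp (-∑ i, |x i|) := by
  simp_rw [← Finset.sum_neg_distrib, Real.exp_sum]
  exact Integrable.fintype_prod fun _ => integrable_exp_neg_abs

namespace IsPolarPair

theorem symm {α β : Type*} [MeasurableSpace α] [MeasurableSpace β] {B : α → β → ℝ} {K : ℝ}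
    {F : α → ℝ} {G : β → ℝ} (h : IsPolarPair B K F G) :
    IsPolarPair (fun y x => B x y) K G F :=
  ⟨h.measurable_right, h.measurable_left, h.pos_right, h.pos_left,
    fun y x => by simpa only [mul_comm] using h.mul_le x y⟩

theorem prodDot_symm {n : ℕ} {K : ℝ} {F G : ℝ × (Fin n → ℝ) → ℝ}
    (h : IsPolarPair prodDot K F G) : IsPolarPair prodDot K G F := by
  have hB : (fun q p : ℝ × (Fin n → ℝ) => prodDot p q) = prodDot := by
    ext p q
    simp only [prodDot, mul_comm, dotProduct_comm]
  simpa only [hB] using h.symm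

theorem exists_le_exp {n : ℕ} {K : ℝ} {F G : (Fin n → ℝ) → ℝ}
    (h : IsPolarPair (· ⬝ᵥ ·) K F G) :
    ∃ C, 0 ≤ C ∧ ∀ x, F x ≤ C * Real.exp (-(2 * ∑ i, |x i|)) := by
  let y : (Fin n → Bool) → Fin n → ℝ := fun σ i => if σ i then 2 else -2
  have hK : 0 < K := by
    have := (mul_pos (h.pos_left 0) (h.pos_right 0)).trans_le (h.mul_le 0 0)
    exact pos_of_mul_pos_left this (Real.exp_pos _).le
  have hnonneg : ∀ σ, 0 ≤ K / G (y σ) := fun σ => (div_pos hK (h.pos_right _)).le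
  refine ⟨∑ σ, K / G (y σ), Finset.sum_nonneg fun σ _ => hnonneg σ, fun x => ?_⟩
  let σ : Fin n → Bool := fun i => decide (0 ≤ x i)
  have hdot : x ⬝ᵥ y σ = 2 * ∑ i, |x i| := by
    rw [Finset.mul_sum, dotProduct]
    refine Finset.sum_congr rfl fun i _ => ?_
    by_cases hi : 0 ≤ x i
    · simp [y, σ, hi, abs_of_nonneg hi, mul_comm]
    · simp [y, σ, hi, abs_of_neg (not_le.1 hi), mul_comm]
  have hle := h.mul_le x (y σ)
  rw [hdot, ← le_div_iff₀ (h.pos_right _), mul_div_right_comm] at hle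
  refine hle.trans ?_
  gcongr
  exact Finset.single_le_sum (fun σ _ => hnonneg σ) (Finset.mem_univ σ)

theorem integrable {n : ℕ} {K : ℝ} {F G : (Fin n → ℝ) → ℝ} (h : IsPolarPair (· ⬝ᵥ ·) K F G) :
    Integrable F := by
  obtain ⟨C, hC, hF⟩ := h.exists_le_exp
  refine ((integrable_exp_neg_sum_abs n).const_mul C).mono'
    h.measurable_left.aestronglyMeasurable (.of_forall fun x => ?_)
  rw [Real.norm_of_nonneg (h.pos_left x).le]
  refine (hF x).trans ?_
  have : 0 ≤ ∑ i, |x i| := Finset.sum_nonneg fun i _ => abs_nonneg _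
  gcongr
  linarith

theorem integrable_coord_mul {n : ℕ} {K : ℝ} {F G : (Fin n → ℝ) → ℝ}
    (h : IsPolarPair (· ⬝ᵥ ·) K F G) (i : Fin n) : Integrable fun x => x i * F x := by
  obtain ⟨C, hC, hF⟩ := h.exists_le_exp
  refine ((integrable_exp_neg_sum_abs n).const_mul C).mono'
    ((measurable_pi_apply i).mul h.measurable_left).aestronglyMeasurable
    (.of_forall fun x => ?_)
  rw [norm_mul, Real.norm_of_nonneg (h.pos_left x).le, Real.norm_eq_abs]
  have hi : |x i| ≤ Real.exp (∑ j, |x j|) :=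
    (Finset.single_le_sum (fun j _ => abs_nonneg (x j)) (Finset.mem_univ i)).trans
      ((le_add_of_nonneg_right zero_le_one).trans (Real.add_one_le_exp _))
  calc |x i| * F x ≤ Real.exp (∑ j, |x j|) * (C * Real.exp (-(2 * ∑ j, |x j|))) :=
        mul_le_mul hi (hF x) (h.pos_left x).le (Real.exp_pos _).le
    _ = C * Real.exp (-∑ j, |x j|) := by
        rw [mul_left_comm, ← Real.exp_add]
        ring_nf

end IsPolarPair

/-- The measurable equivalence splitting off the first coordinate. -/
noncomputable def splitFirst (n : ℕ) : (Fin (n + 1) → ℝ) ≃ᵐ ℝ × (Fin n → ℝ) :=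
  MeasurableEquiv.piFinSuccAbove (fun _ => ℝ) 0

theorem measurePreserving_splitFirst (n : ℕ) : MeasurePreserving (splitFirst n) :=
  volume_preserving_piFinSuccAbove (fun _ => ℝ) 0

theorem splitFirst_apply {n : ℕ} (x : Fin (n + 1) → ℝ) :
    splitFirst n x = (x 0, fun i => x i.succ) := by
  rfl

theorem prodDot_splitFirst {n : ℕ} (x y : Fin (n + 1) → ℝ) :
    prodDot (splitFirst n x) (splitFirst n y) = x ⬝ᵥ y := by
  simp only [prodDot, splitFirst_apply, dotProduct, Fin.sum_univ_succ]

namespace IsPolarPair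

variable {n : ℕ} {K : ℝ} {F G : ℝ × (Fin n → ℝ) → ℝ}

theorem comp_splitFirst (h : IsPolarPair prodDot K F G) :
    IsPolarPair (· ⬝ᵥ ·) K (F ∘ splitFirst n) (G ∘ splitFirst n) :=
  ⟨h.measurable_left.comp (splitFirst n).measurable,
    h.measurable_right.comp (splitFirst n).measurable, fun _ => h.pos_left _,
    fun _ => h.pos_right _, fun x y => by
      simpa only [prodDot_splitFirst, Function.comp_apply] using
        h.mul_le (splitFirst n x) (splitFirst n y)⟩

theorem integrable_prod (h : IsPolarPair prodDot K F G) : Integrable F :=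
  ((measurePreserving_splitFirst n).integrable_comp_emb
    (splitFirst n).measurableEmbedding).1 h.comp_splitFirst.integrable

theorem integrable_fst_mul (h : IsPolarPair prodDot K F G) :
    Integrable fun p : ℝ × (Fin n → ℝ) => p.1 * F p :=
  ((measurePreserving_splitFirst n).integrable_comp_emb
    (splitFirst n).measurableEmbedding).1 (h.comp_splitFirst.integrable_coord_mul 0)

theorem integrable_snd_mul (h : IsPolarPair prodDot K F G) (i : Fin n) :
    Integrable fun p : ℝ × (Fin n → ℝ) => p.2 i * F p :=
  ((measurePreserving_splitFirst n).integrable_comp_emb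
    (splitFirst n).measurableEmbedding).1 (h.comp_splitFirst.integrable_coord_mul i.succ)

theorem slice (h : IsPolarPair prodDot K F G) (s : ℝ) :
    IsPolarPair (· ⬝ᵥ ·) K (fun y => F (s, y)) (fun w => G (0, w)) :=
  ⟨h.measurable_left.comp (by fun_prop), h.measurable_right.comp (by fun_prop),
    fun _ => h.pos_left _, fun _ => h.pos_right _,
    fun y w => by simpa [prodDot] using h.mul_le (s, y) (0, w)⟩

theorem fiber_mul_le (h : IsPolarPair prodDot K F G) (y w : Fin n → ℝ) (s t : ℝ) :
    F (s, y) * G (t, w) ≤ K * Real.exp (-(y ⬝ᵥ w)) * Real.exp (-(s * t)) := by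
  refine (h.mul_le (s, y) (t, w)).trans_eq ?_
  rw [mul_assoc, ← Real.exp_add, prodDot]
  ring_nf

theorem integrableOn_fiber (h : IsPolarPair prodDot K F G) (y : Fin n → ℝ) :
    IntegrableOn (fun s => F (s, y)) (Ioi 0) :=
  integrableOn_Ioi_of_mul_le (h.measurable_left.comp (by fun_prop))
    (G := fun t => G (t, 0)) (h.measurable_right.comp (by fun_prop)) (fun _ => h.pos_left _)
    (fun _ => h.pos_right _) fun s t _ _ => h.fiber_mul_le y 0 s t

theorem marginal (h : IsPolarPair prodDot K F G) :
    IsPolarPair (· ⬝ᵥ ·) (K * (Real.pi / 2)) (fun y => ∫ s in Ioi 0, F (s, y))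
      (fun w => ∫ t in Ioi 0, G (t, w)) where
  measurable_left := h.measurable_left.stronglyMeasurable.integral_prod_left'.measurable
  measurable_right := h.measurable_right.stronglyMeasurable.integral_prod_left'.measurable
  pos_left y := integral_Ioi_pos (h.measurable_left.comp (by fun_prop))
    (fun _ _ => h.pos_left _) (h.integrableOn_fiber y)
  pos_right w := integral_Ioi_pos (h.measurable_right.comp (by fun_prop))
    (fun _ _ => h.pos_right _) (h.prodDot_symm.integrableOn_fiber w)
  mul_le y w := (integral_Ioi_mul_integral_Ioi_le (h.measurable_left.comp (by fun_prop))
    (h.measurable_right.comp (by fun_prop)) (fun _ => h.pos_left _) (fun _ => h.pos_right _)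
    fun s t _ _ => h.fiber_mul_le y w s t).trans_eq (by ring)

theorem reflect (h : IsPolarPair prodDot K F G) :
    IsPolarPair prodDot K (fun p => F (-p.1, p.2)) (fun p => G (-p.1, p.2)) :=
  ⟨h.measurable_left.comp (by fun_prop), h.measurable_right.comp (by fun_prop),
    fun _ => h.pos_left _, fun _ => h.pos_right _,
    fun p q => by simpa [prodDot] using h.mul_le (-p.1, p.2) (-q.1, q.2)⟩

end IsPolarPair

theorem integral_Ioi_integral_swap {n : ℕ} {H : ℝ × (Fin n → ℝ) → ℝ} (hH : Integrable H) :
    ∫ y, ∫ s in Ioi 0, H (s, y) = ∫ s in Ioi 0, ∫ y, H (s, y) := by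
  refine (integral_integral_swap (f := fun s y => H (s, y)) ?_).symm
  have h := hH.restrict (s := Ioi 0 ×ˢ univ)
  rwa [Measure.volume_eq_prod, ← Measure.prod_restrict, Measure.restrict_univ] at h

/-- The inductive step on a half-space whose marginal is centered. -/
theorem SantaloInequality.halfSpace {n : ℕ} (hn : SantaloInequality n) {K : ℝ}
    {F G : ℝ × (Fin n → ℝ) → ℝ} (h : IsPolarPair prodDot K F G)
    (hbar : ∀ i, ∫ s in Ioi 0, ∫ y, y i * F (s, y) = 0) :
    (∫ s in Ioi 0, ∫ y, F (s, y)) * (∫ t in Ioi 0, ∫ w, G (t, w)) ≤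
      K * (Real.pi / 2) * (2 * Real.pi) ^ n := by
  rw [← integral_Ioi_integral_swap h.integrable_prod,
    ← integral_Ioi_integral_swap h.prodDot_symm.integrable_prod]
  refine hn _ _ _ h.marginal fun i => ?_
  simp_rw [← integral_const_mul]
  rw [integral_Ioi_integral_swap (h.integrable_snd_mul i)]
  exact hbar i

theorem integral_Ioi_sub_affine_mul {φ ψ : ℝ → ℝ} (hφ : Integrable φ) (hψ : Integrable ψ)
    (hφ' : Integrable fun s => s * φ s) (ζ ν : ℝ) :
    ∫ s in Ioi 0, (ψ s - (ζ + s * ν) * φ s) =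
      (∫ s in Ioi 0, ψ s) - ζ * (∫ s in Ioi 0, φ s) - ν * ∫ s in Ioi 0, s * φ s := by
  rw [← integral_const_mul, ← integral_const_mul,
    ← integral_sub hψ.integrableOn (hφ.integrableOn.const_mul ζ),
    ← integral_sub (by exact hψ.integrableOn.sub (hφ.integrableOn.const_mul ζ))
      (hφ'.integrableOn.const_mul ν)]
  congr 1
  ext s
  ring

/-- There are an affine hyperplane halving the mass of `F` and a line crossing it which carries
the barycenters of both halves; here these are expressed after the shear straightening the line. -/
theorem IsPolarPair.exists_center {n : ℕ} {K : ℝ} {F G : ℝ × (Fin n → ℝ) → ℝ}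
    (h : IsPolarPair prodDot K F G) :
    ∃ (c : ℝ) (z v : Fin n → ℝ),
      (∫ s in Ioi 0, ∫ y, F (s + c, y + (z + s • v))) = (∫ p, F p) / 2 ∧
      (∫ s in Ioi 0, ∫ y, F (-s + c, y + (z + -s • v))) = (∫ p, F p) / 2 ∧
      (∀ i, ∫ s in Ioi 0, ∫ y, y i * F (s + c, y + (z + s • v)) = 0) ∧
      ∀ i, ∫ s in Ioi 0, ∫ y, y i * F (-s + c, y + (z + -s • v)) = 0 := by
  set Φ : ℝ → ℝ := fun s => ∫ y, F (s, y)
  set Ψ : Fin n → ℝ → ℝ := fun i s => ∫ y, y i * F (s, y)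
  have hmass : ∀ s u, ∫ y, F (s, y + u) = Φ s := fun s u =>
    integral_add_right_eq_self (fun y => F (s, y)) u
  have hmoment : ∀ i s (u : Fin n → ℝ), ∫ y, y i * F (s, y + u) = Ψ i s - u i * Φ s := by
    intro i s u
    have h₁ := integral_add_right_eq_self (μ := volume)
      (fun y : Fin n → ℝ => (y i - u i) * F (s, y)) u
    simp only [Pi.add_apply, add_sub_cancel_right] at h₁
    rw [h₁]
    simp_rw [sub_mul]
    rw [integral_sub ((h.slice s).integrable_coord_mul i)
      ((h.slice s).integrable.const_mul _), integral_const_mul]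
  have hΦ : Integrable Φ := h.integrable_prod.integral_prod_left
  have hΦ' : Integrable fun s => s * Φ s := by
    have := h.integrable_fst_mul.integral_prod_left
    simpa only [integral_const_mul] using this
  have hΨ : ∀ i, Integrable (Ψ i) := fun i => (h.integrable_snd_mul i).integral_prod_left
  have hΦm : Measurable Φ := h.measurable_left.stronglyMeasurable.integral_prod_right'.measurable
  have hΦpos : ∀ s, 0 < Φ s := fun s => by
    refine (integral_pos_iff_support_of_nonneg (fun y => (h.pos_left _).le)
      (h.slice s).integrable).2 ?_
    rw [Function.support_eq_univ fun y => (h.pos_left _).ne']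
    exact Measure.measure_univ_pos.2 (NeZero.ne _)
  have hΦint : ∫ s, Φ s = ∫ p, F p := (integral_prod _ h.integrable_prod).symm
  have hpos : 0 < ∫ s, Φ s := by
    rw [integral_eq_integral_Ioi_add hΦ]
    exact add_pos (integral_Ioi_pos hΦm (fun s _ => hΦpos s) hΦ.integrableOn)
      (integral_Ioi_pos (hΦm.comp measurable_neg) (fun s _ => hΦpos _) hΦ.comp_neg.integrableOn)
  obtain ⟨c, hc₁, hc₂⟩ := exists_median hΦ hpos
  rw [hΦint] at hc₁ hc₂ hpos
  have hΦ₁ : Integrable fun s => Φ (s + c) := hΦ.comp_add_right c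
  have hΦ₂ : Integrable fun s => Φ (-s + c) := hΦ₁.comp_neg
  have hΦ₁' : Integrable fun s => s * Φ (s + c) := by
    have := (hΦ'.comp_add_right c).sub (hΦ₁.const_mul c)
    refine this.congr (.of_forall fun s => ?_)
    simp only [Pi.sub_apply]
    ring
  have hΦ₂' : Integrable fun s => s * Φ (-s + c) := by
    refine hΦ₁'.comp_neg.neg.congr (.of_forall fun s => ?_)
    simp
  have hΨ₁ : ∀ i, Integrable fun s => Ψ i (s + c) := fun i => (hΨ i).comp_add_right c
  have hΨ₂ : ∀ i, Integrable fun s => Ψ i (-s + c) := fun i => (hΨ₁ i).comp_neg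
  set a := ∫ s in Ioi 0, s * Φ (s + c)
  set b := ∫ s in Ioi 0, s * Φ (-s + c)
  have hab : a + b ≠ 0 := by
    refine (add_pos (integral_Ioi_pos ?_ (fun s hs => mul_pos hs (hΦpos _)) hΦ₁'.integrableOn)
      (integral_Ioi_pos ?_ (fun s hs => mul_pos hs (hΦpos _)) hΦ₂'.integrableOn)).ne'
    · exact measurable_id.mul (hΦm.comp (by fun_prop))
    · exact measurable_id.mul (hΦm.comp (by fun_prop))
  let v : Fin n → ℝ := fun i =>
    ((∫ s in Ioi 0, Ψ i (s + c)) - ∫ s in Ioi 0, Ψ i (-s + c)) / (a + b)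
  let z : Fin n → ℝ := fun i => ((∫ s in Ioi 0, Ψ i (s + c)) - v i * a) / ((∫ p, F p) / 2)
  refine ⟨c, z, v, by simpa only [hmass], by simpa only [hmass], fun i => ?_, fun i => ?_⟩
  · simp only [hmoment, Pi.add_apply, Pi.smul_apply, smul_eq_mul]
    rw [integral_Ioi_sub_affine_mul hΦ₁ (hΨ₁ i) hΦ₁', hc₁]
    simp only [z]
    field_simp
    ring
  · simp only [hmoment, Pi.add_apply, Pi.smul_apply, smul_eq_mul, neg_mul_comm]
    rw [integral_Ioi_sub_affine_mul hΦ₂ (hΨ₂ i) hΦ₂', hc₂]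
    simp only [z, v]
    field_simp
    ring

theorem IsPolarPair.shear {n : ℕ} {K : ℝ} {F G : ℝ × (Fin n → ℝ) → ℝ}
    (h : IsPolarPair prodDot K F G) (c : ℝ) (z v : Fin n → ℝ) :
    IsPolarPair prodDot K (fun p => F (p.1 + c, p.2 + (z + p.1 • v)))
      (fun q => G (q.1 - v ⬝ᵥ q.2, q.2) *
        Real.exp (c * (q.1 - v ⬝ᵥ q.2) + z ⬝ᵥ q.2)) where
  measurable_left := h.measurable_left.comp (by fun_prop)
  measurable_right := by
    have hdot : ∀ u : Fin n → ℝ, Measurable fun q : ℝ × (Fin n → ℝ) => u ⬝ᵥ q.2 := fun u => by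
      unfold dotProduct
      fun_prop
    have h₁ := hdot v
    have h₂ := hdot z
    exact (h.measurable_right.comp (by fun_prop)).mul (by fun_prop)
  pos_left _ := h.pos_left _
  pos_right _ := mul_pos (h.pos_right _) (Real.exp_pos _)
  mul_le p q := by
    rw [← mul_assoc]
    refine (mul_le_mul_of_nonneg_right (h.mul_le _ _) (Real.exp_pos _).le).trans_eq ?_
    rw [mul_assoc, ← Real.exp_add]
    simp only [prodDot, add_dotProduct, smul_dotProduct, smul_eq_mul]
    ring_nf

theorem integral_shear {n : ℕ} {H : ℝ × (Fin n → ℝ) → ℝ} (v : Fin n → ℝ) (hH : Integrable H)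
    (hH' : Integrable fun q : ℝ × (Fin n → ℝ) => H (q.1 - v ⬝ᵥ q.2, q.2)) :
    ∫ q : ℝ × (Fin n → ℝ), H (q.1 - v ⬝ᵥ q.2, q.2) = ∫ q, H q := by
  rw [Measure.volume_eq_prod] at hH hH' ⊢
  rw [integral_prod_symm _ hH, integral_prod_symm _ hH']
  exact integral_congr_ae (.of_forall fun w =>
    integral_sub_right_eq_self (fun t => H (t, w)) (v ⬝ᵥ w))

/-- Tilting a centered density by an exponential does not decrease its integral. -/
theorem integral_le_integral_mul_exp {n : ℕ} {F : ℝ × (Fin n → ℝ) → ℝ} {c : ℝ} {z : Fin n → ℝ}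
    (hpos : ∀ p, 0 < F p) (hF : Integrable F)
    (h₁ : Integrable fun p : ℝ × (Fin n → ℝ) => p.1 * F p)
    (h₂ : ∀ i, Integrable fun p : ℝ × (Fin n → ℝ) => p.2 i * F p)
    (hbar₁ : ∫ p : ℝ × (Fin n → ℝ), p.1 * F p = 0)
    (hbar₂ : ∀ i, ∫ p : ℝ × (Fin n → ℝ), p.2 i * F p = 0)
    (hexp : Integrable fun p => F p * Real.exp (c * p.1 + z ⬝ᵥ p.2)) :
    ∫ p, F p ≤ ∫ p, F p * Real.exp (c * p.1 + z ⬝ᵥ p.2) := by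
  have hsum : Integrable fun p : ℝ × (Fin n → ℝ) => ∑ i, z i * (p.2 i * F p) :=
    integrable_finsetSum _ fun i _ => (h₂ i).const_mul (z i)
  calc ∫ p, F p = ∫ p : ℝ × (Fin n → ℝ), (F p + c * (p.1 * F p) + ∑ i, z i * (p.2 i * F p)) := by
        rw [integral_add (by exact hF.add (h₁.const_mul c)) hsum, integral_add hF (h₁.const_mul c),
          integral_const_mul, hbar₁, integral_finsetSum _ fun i _ => (h₂ i).const_mul (z i)]
        simp [integral_const_mul, hbar₂]
    _ ≤ _ := by
        refine integral_mono ((hF.add (h₁.const_mul c)).add hsum) hexp fun p => ?_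
        have hlin : F p + c * (p.1 * F p) + ∑ i, z i * (p.2 i * F p) =
            F p * (c * p.1 + z ⬝ᵥ p.2 + 1) := by
          simp only [dotProduct, mul_add, Finset.mul_sum]
          have : ∀ i, z i * (p.2 i * F p) = F p * (z i * p.2 i) := fun i => by ring
          simp only [this]
          ring
        exact hlin.trans_le <| mul_le_mul_of_nonneg_left (Real.add_one_le_exp _)
          (hpos p).le

theorem SantaloInequality.prod {n : ℕ} (hn : SantaloInequality n) {K : ℝ}
    {F G : ℝ × (Fin n → ℝ) → ℝ} (h : IsPolarPair prodDot K F G)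
    (hbar₁ : ∫ p : ℝ × (Fin n → ℝ), p.1 * F p = 0)
    (hbar₂ : ∀ i, ∫ p : ℝ × (Fin n → ℝ), p.2 i * F p = 0) :
    (∫ p, F p) * (∫ p, G p) ≤ K * (2 * Real.pi) ^ (n + 1) := by
  obtain ⟨c, z, v, hm₁, hm₂, hb₁, hb₂⟩ := h.prodDot_symm.exists_center
  have htilt := (h.prodDot_symm.shear c z 0).prodDot_symm.integrable_prod
  simp only [zero_dotProduct, sub_zero] at htilt
  have hshear := h.prodDot_symm.shear c z v
  have hi := hshear.prodDot_symm.integrable_prod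
  have hle := integral_le_integral_mul_exp h.pos_left h.integrable_prod h.integrable_fst_mul
    h.integrable_snd_mul hbar₁ hbar₂ htilt
  rw [← integral_shear v htilt hi, Measure.volume_eq_prod, integral_prod _ hi,
    integral_eq_integral_Ioi_add hi.integral_prod_left] at hle
  have hupper := hn.halfSpace hshear hb₁
  have hlower := hn.halfSpace hshear.reflect hb₂
  simp only [hm₁, hm₂] at hupper hlower
  have hG : 0 ≤ ∫ p, G p := integral_nonneg fun p => (h.pos_right p).le
  calc (∫ p, F p) * (∫ p, G p) ≤ _ * (∫ p, G p) := mul_le_mul_of_nonneg_right hle hG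
    _ ≤ K * (2 * Real.pi) ^ (n + 1) := by
      rw [pow_succ]
      linarith

theorem santaloInequality (n : ℕ) : SantaloInequality n := by
  induction n with
  | zero =>
    intro K F G h _
    have hint : ∀ H : (Fin 0 → ℝ) → ℝ, ∫ x, H x = H 0 := fun H => by
      rw [volume_pi, Measure.pi_of_empty _ 0, integral_dirac]
    simpa [hint] using h.mul_le 0 0
  | succ n ih =>
    intro K F G h hbar
    have h' : IsPolarPair prodDot K (F ∘ (splitFirst n).symm) (G ∘ (splitFirst n).symm) :=
      ⟨h.measurable_left.comp (splitFirst n).symm.measurable,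
        h.measurable_right.comp (splitFirst n).symm.measurable, fun _ => h.pos_left _,
        fun _ => h.pos_right _, fun p q => by
          have := h.mul_le ((splitFirst n).symm p) ((splitFirst n).symm q)
          simpa only [← prodDot_splitFirst, MeasurableEquiv.apply_symm_apply,
            Function.comp_apply] using this⟩
    have hint := fun H : ℝ × (Fin n → ℝ) → ℝ =>
      (measurePreserving_splitFirst n).integral_comp' (f := splitFirst n) H
    have key := ih.prod h' ?_ fun i => ?_
    · rw [← hint, ← hint] at key
      simpa using key
    · rw [← hint]
      simp only [Function.comp_apply, MeasurableEquiv.symm_apply_apply]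
      simpa only [splitFirst_apply] using hbar 0
    · rw [← hint]
      simp only [Function.comp_apply, MeasurableEquiv.symm_apply_apply]
      simpa only [splitFirst_apply] using hbar i.succ

/-- **Functional Santaló inequality** (Lehec): if `f, g : ℝ^d → ℝ` are measurable with
`f(x) + g(y) ≤ -x·y` for all `x, y`, and `e^f` is integrable with barycenter at the origin,
then `(∫ e^f dx)(∫ e^g dy) ≤ (2π)^d`. -/
theorem functional_santalo (d : ℕ) (hd : 1 ≤ d)
    (f g : EuclideanSpace ℝ (Fin d) → ℝ) (hf : Measurable f) (hg : Measurable g)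
    (hfg : ∀ x y, f x + g y ≤ -⟪x, y⟫)
    (hint : Integrable (fun x => Real.exp (f x)))
    (hbar : ∫ x, Real.exp (f x) • x = 0) :
    (∫ x, Real.exp (f x)) * (∫ y, Real.exp (g y)) ≤ (2 * Real.pi) ^ d := by
  have hcv := fun H : EuclideanSpace ℝ (Fin d) → ℝ =>
    (EuclideanSpace.volume_preserving_symm_measurableEquiv_toLp (Fin d)).symm.integral_comp' H
  have hpolar : IsPolarPair (· ⬝ᵥ ·) 1 (fun x => Real.exp (f (WithLp.toLp 2 x)))
      (fun y => Real.exp (g (WithLp.toLp 2 y))) :=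
    ⟨by fun_prop, by fun_prop, fun _ => Real.exp_pos _, fun _ => Real.exp_pos _, fun x y => by
      rw [one_mul, ← Real.exp_add, Real.exp_le_exp]
      refine (hfg _ _).trans_eq ?_
      simp [EuclideanSpace.inner_eq_star_dotProduct, dotProduct_comm]⟩
  have key := santaloInequality d _ _ _ hpolar fun i => ?_
  · have h₁ := hcv fun x => Real.exp (f x)
    have h₂ := hcv fun x => Real.exp (g x)
    simp only [MeasurableEquiv.symm_symm, MeasurableEquiv.coe_toLp] at h₁ h₂
    rwa [h₁, h₂, one_mul] at key
  · have h₁ := hcv fun x => x i * Real.exp (f x)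
    simp only [MeasurableEquiv.symm_symm, MeasurableEquiv.coe_toLp] at h₁
    rw [h₁]
    have hi : Integrable fun x : EuclideanSpace ℝ (Fin d) => Real.exp (f x) • x := by
      refine Integrable.of_eval_piLp fun j => ?_
      have h₂ := ((EuclideanSpace.volume_preserving_symm_measurableEquiv_toLp
        (Fin d)).integrable_comp_emb (MeasurableEquiv.measurableEmbedding _)).2
        (hpolar.integrable_coord_mul j)
      simpa [Function.comp_def, mul_comm] using h₂
    have h₂ := (EuclideanSpace.proj (𝕜 := ℝ) i).integral_comp_comm hi
    rw [hbar, map_zero] at h₂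
    simpa [mul_comm] using h₂
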